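/- arXiv:1701.06644 — 6 statements merged into one kernel-verified Lean document; each statement's English description precedes it below -/
import Mathlib

section
/- Let M = (S, A, δ) be a finite fuzzy transition system and γ ∈ (0,1] a discount factor. For all functions d, d' : S × S → [0,1], if d ⪯ d' then Δ(d) ⪯ Δ(d'); that is, the functional Δ is monotonic with respect to the pointwise order. -/
/-!
Each operation from which `Δ` is assembled (minimum, maximum over a finite set, infimum,
multiplication by `γ ≥ 0`) is monotone, and the case distinctions in the definitions do not depend
on `d`. The only step that is not immediate is the infimum defining the lifted distance
(`liftDist_mono`): feasibility of `x` does not depend on `d` either, so every value of the program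
for `d'` dominates the value of the program for `d` at the same `x`, and the latter values are
bounded below by `0`. If no `x` is feasible, both infima are `sInf ∅ = 0`.
-/

open Finset
open scoped Classical

noncomputable section

variable {S A : Type*} [Fintype S] [Nonempty S] [Fintype A] [Nonempty A]

/-- The maximum value of a fuzzy subset `μ : S → ℝ` over the finite nonempty set `S`. -/
def maxS (μ : S → ℝ) : ℝ := Finset.univ.sup' Finset.univ_nonempty μ

/-- Feasibility for the mathematical program defining the lifted distance. -/
def Feasible (μ η : S → ℝ) (x : S → S → ℝ) : Prop :=
  (∀ u v, 0 ≤ x u v) ∧ (∀ u, maxS (x u) = μ u) ∧ (∀ v, maxS (fun u => x u v) = η v)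

/-- The lifted distance `d̂(μ,η)` induced by `d` on fuzzy subsets. -/
def liftDist (d : S → S → ℝ) (μ η : S → ℝ) : ℝ :=
  if maxS μ = maxS η then
    sInf {r : ℝ | ∃ x : S → S → ℝ, Feasible μ η x ∧
      r = Finset.univ.sup' Finset.univ_nonempty
            (fun p : S × S => min (d p.1 p.2) (x p.1 p.2))}
  else 1

/-- Distance from a fuzzy subset to a finite set of fuzzy subsets. -/
def liftDistSet (d : S → S → ℝ) (μ : S → ℝ) (W : Finset (S → ℝ)) : ℝ :=
  if h : W.Nonempty then W.inf' h (liftDist d μ) else 1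

/-- Max of `f` over a finite set of fuzzy subsets, `0` if the set is empty. -/
def sup0 (Y : Finset (S → ℝ)) (f : (S → ℝ) → ℝ) : ℝ :=
  if h : Y.Nonempty then Y.sup' h f else 0

/-- Hausdorff distance induced by `d` on finite sets of fuzzy subsets. -/
def Hdist (d : S → S → ℝ) (Y Z : Finset (S → ℝ)) : ℝ :=
  if Y = ∅ ∧ Z = ∅ then 0
  else max (sup0 Y fun μ => liftDistSet d μ Z) (sup0 Z fun ν => liftDistSet d ν Y)

/-- The functional `Δ` with discount factor `γ` on a fuzzy transition system `δ`. -/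
def Delta (γ : ℝ) (δ : S → A → Finset (S → ℝ)) (d : S → S → ℝ) : S → S → ℝ :=
  fun s t => γ * Finset.univ.sup' Finset.univ_nonempty (fun a => Hdist d (δ s a) (δ t a))

/-- All fuzzy subsets occurring in the transition function take values in `[0,1]`. -/
def FTSvalid (δ : S → A → Finset (S → ℝ)) : Prop :=
  ∀ s a, ∀ μ ∈ δ s a, ∀ u, μ u ∈ Set.Icc (0:ℝ) 1

/-- The set `Θ_M` of membership values occurring in the system, together with `0` and `1`. -/
def ThetaM (δ : S → A → Finset (S → ℝ)) : Set ℝ :=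
  {r : ℝ | ∃ s a μ, μ ∈ δ s a ∧ ∃ u, μ u = r} ∪ {0, 1}

/-- The supremum norm of the difference of two distance functions. -/
def dnorm (d d' : S → S → ℝ) : ℝ :=
  Finset.univ.sup' Finset.univ_nonempty (fun p : S × S => |d p.1 p.2 - d' p.1 p.2|)

end

theorem liftDist_mono {S : Type*} [Fintype S] [Nonempty S] {d d' : S → S → ℝ}
    (hd : ∀ s t, 0 ≤ d s t) (hle : ∀ s t, d s t ≤ d' s t) (μ η : S → ℝ) :
    liftDist d μ η ≤ liftDist d' μ η := by
  unfold liftDist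
  split_ifs with hmax
  · by_cases hfeas : ∃ x, Feasible μ η x
    · obtain ⟨x₀, hx₀⟩ := hfeas
      refine le_csInf ⟨_, x₀, hx₀, rfl⟩ ?_
      rintro _ ⟨x, hx, rfl⟩
      refine le_trans (csInf_le ⟨0, ?_⟩ ⟨x, hx, rfl⟩) ?_
      · rintro _ ⟨y, hy, rfl⟩
        obtain ⟨p⟩ : Nonempty (S × S) := inferInstance
        exact (le_min (hd p.1 p.2) (hy.1 p.1 p.2)).trans
          (Finset.le_sup' (fun p : S × S => min (d p.1 p.2) (y p.1 p.2)) (Finset.mem_univ p))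
      · exact Finset.sup'_mono_fun fun p _ => min_le_min_right _ (hle p.1 p.2)
    · -- No coupling is feasible, so both sets of values are empty.
      have hempty : ∀ e : S → S → ℝ, {r : ℝ | ∃ x : S → S → ℝ, Feasible μ η x ∧
          r = Finset.univ.sup' Finset.univ_nonempty
            (fun p : S × S => min (e p.1 p.2) (x p.1 p.2))} = ∅ := fun e =>
        Set.eq_empty_of_forall_notMem fun _ ⟨x, hx, _⟩ => hfeas ⟨x, hx⟩
      rw [hempty d, hempty d']
  · exact le_rfl

theorem liftDistSet_mono {S : Type*} [Fintype S] [Nonempty S] {d d' : S → S → ℝ}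
    (hd : ∀ s t, 0 ≤ d s t) (hle : ∀ s t, d s t ≤ d' s t) (μ : S → ℝ) (W : Finset (S → ℝ)) :
    liftDistSet d μ W ≤ liftDistSet d' μ W := by
  unfold liftDistSet
  split_ifs with hW
  · exact Finset.inf'_mono_fun fun ν _ => liftDist_mono hd hle μ ν
  · exact le_rfl

theorem sup0_mono {S : Type*} {f g : (S → ℝ) → ℝ} (hfg : ∀ μ, f μ ≤ g μ)
    (Y : Finset (S → ℝ)) : sup0 Y f ≤ sup0 Y g := by
  unfold sup0
  split_ifs with hY
  · exact Finset.sup'_mono_fun fun μ _ => hfg μ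
  · exact le_rfl

theorem Hdist_mono {S : Type*} [Fintype S] [Nonempty S] {d d' : S → S → ℝ}
    (hd : ∀ s t, 0 ≤ d s t) (hle : ∀ s t, d s t ≤ d' s t) (Y Z : Finset (S → ℝ)) :
    Hdist d Y Z ≤ Hdist d' Y Z := by
  unfold Hdist
  split_ifs with hYZ
  · exact le_rfl
  · exact max_le_max (sup0_mono (fun μ => liftDistSet_mono hd hle μ Z) Y)
      (sup0_mono (fun ν => liftDistSet_mono hd hle ν Y) Z)

/-- the functional `Δ` is monotonic with respect to the pointwise order. -/
theorem Delta_monotone {S A : Type*} [Fintype S] [Nonempty S] [Fintype A] [Nonempty A]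
    (γ : ℝ) (hγ : γ ∈ Set.Ioc (0:ℝ) 1)
    (δ : S → A → Finset (S → ℝ)) (hδ : FTSvalid δ)
    (d d' : S → S → ℝ)
    (hd : ∀ s t, d s t ∈ Set.Icc (0:ℝ) 1) (hd' : ∀ s t, d' s t ∈ Set.Icc (0:ℝ) 1)
    (hle : ∀ s t, d s t ≤ d' s t) :
    ∀ s t, Delta γ δ d s t ≤ Delta γ δ d' s t := by
  intro s t
  exact mul_le_mul_of_nonneg_left
    (Finset.sup'_mono_fun fun a _ => Hdist_mono (fun u v => (hd u v).1) hle (δ s a) (δ t a))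
    hγ.1.le
end

section
/- Let M = (S, A, δ) be a finite fuzzy transition system and γ ∈ (0,1] a discount factor. Then the sequence (Δ^n(⊥))_{n∈ℕ} is nondecreasing with respect to ⪯; its pointwise supremum d* = sup_{n∈ℕ} Δ^n(⊥) satisfies Δ(d*) = d*; and for every d : S × S → [0,1] with Δ(d) ⪯ d one has d* ⪯ d. In particular, d* is the least fixpoint of Δ. -/
/-!
The functional `Δ` is built from minima, maxima, infima and multiplication by `γ ≤ 1`, so it is
nonexpansive in a one-sided sense: `d' ≤ d + ε` implies `Δ d' ≤ Δ d + ε`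
(`Delta_le_Delta_add`). With `ε = 0` this is monotonicity, which gives that the Kleene chain is
nondecreasing, that it stays below every pre-fixpoint, and that `d* ≤ Δ d*`. Since `S` is finite,
the pointwise convergence of the chain (which lies in `[0,1]`) to `d*` is uniform, so for each
`ε > 0` some iterate satisfies `d* ≤ Δ^n ⊥ + ε`; nonexpansiveness then yields
`Δ d* ≤ Δ^(n+1) ⊥ + ε ≤ d* + ε`.
-/

open Finset
open scoped Classical

open Filter Topology

section Helpers

variable {S A : Type*} [Fintype S] [Nonempty S] [Fintype A] [Nonempty A]

/-- The objective of the program defining the lifted distance is nonnegative when `d` and `x` are. -/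
lemma objective_nonneg {d x : S → S → ℝ} (hd : ∀ s t, 0 ≤ d s t) (hx : ∀ s t, 0 ≤ x s t) :
    0 ≤ Finset.univ.sup' Finset.univ_nonempty
      (fun p : S × S => min (d p.1 p.2) (x p.1 p.2)) := by
  obtain ⟨p⟩ : Nonempty (S × S) := inferInstance
  exact (le_min (hd p.1 p.2) (hx p.1 p.2)).trans
    (Finset.le_sup' (fun p : S × S => min (d p.1 p.2) (x p.1 p.2)) (Finset.mem_univ p))

lemma liftDist_mem_Icc {d : S → S → ℝ} (hd : ∀ s t, d s t ∈ Set.Icc (0 : ℝ) 1) (μ η : S → ℝ) :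
    liftDist d μ η ∈ Set.Icc (0 : ℝ) 1 := by
  unfold liftDist
  split_ifs with h
  · have hlow : ∀ r ∈ {r : ℝ | ∃ x : S → S → ℝ, Feasible μ η x ∧
        r = Finset.univ.sup' Finset.univ_nonempty
            (fun p : S × S => min (d p.1 p.2) (x p.1 p.2))}, 0 ≤ r := by
      rintro r ⟨x, hx, rfl⟩
      exact objective_nonneg (fun s t => (hd s t).1) hx.1
    refine ⟨Real.sInf_nonneg hlow, ?_⟩
    by_cases hf : ∃ x, Feasible μ η x
    · obtain ⟨x, hx⟩ := hf
      refine (csInf_le ⟨0, hlow⟩ ⟨x, hx, rfl⟩).trans ?_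
      exact Finset.sup'_le _ _ fun p _ => (min_le_left _ _).trans (hd p.1 p.2).2
    · -- with no feasible `x` the infimum is the junk value `sInf ∅ = 0`
      have : {r : ℝ | ∃ x : S → S → ℝ, Feasible μ η x ∧
        r = Finset.univ.sup' Finset.univ_nonempty
            (fun p : S × S => min (d p.1 p.2) (x p.1 p.2))} = ∅ := by
        ext r
        simp only [Set.mem_ofPred_eq, Set.mem_empty_iff_false, iff_false]
        rintro ⟨x, hx, -⟩
        exact hf ⟨x, hx⟩
      rw [this, Real.sInf_empty]
      exact zero_le_one
  · exact ⟨zero_le_one, le_rfl⟩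

lemma liftDistSet_mem_Icc {d : S → S → ℝ} (hd : ∀ s t, d s t ∈ Set.Icc (0 : ℝ) 1) (μ : S → ℝ)
    (W : Finset (S → ℝ)) : liftDistSet d μ W ∈ Set.Icc (0 : ℝ) 1 := by
  unfold liftDistSet
  split_ifs with h
  · refine ⟨Finset.le_inf' _ _ fun ν _ => (liftDist_mem_Icc hd μ ν).1, ?_⟩
    obtain ⟨ν, hν⟩ := h
    exact (Finset.inf'_le _ hν).trans (liftDist_mem_Icc hd μ ν).2
  · exact ⟨zero_le_one, le_rfl⟩

lemma sup0_mem_Icc {Y : Finset (S → ℝ)} {f : (S → ℝ) → ℝ}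
    (hf : ∀ μ, f μ ∈ Set.Icc (0 : ℝ) 1) : sup0 Y f ∈ Set.Icc (0 : ℝ) 1 := by
  unfold sup0
  split_ifs with h
  · refine ⟨?_, Finset.sup'_le _ _ fun μ _ => (hf μ).2⟩
    obtain ⟨μ, hμ⟩ := h
    exact (hf μ).1.trans (Finset.le_sup' f hμ)
  · exact ⟨le_rfl, zero_le_one⟩

lemma Hdist_mem_Icc {d : S → S → ℝ} (hd : ∀ s t, d s t ∈ Set.Icc (0 : ℝ) 1)
    (Y Z : Finset (S → ℝ)) : Hdist d Y Z ∈ Set.Icc (0 : ℝ) 1 := by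
  unfold Hdist
  split_ifs with h
  · exact ⟨le_rfl, zero_le_one⟩
  · have h1 := sup0_mem_Icc (Y := Y) fun μ => liftDistSet_mem_Icc hd μ Z
    have h2 := sup0_mem_Icc (Y := Z) fun μ => liftDistSet_mem_Icc hd μ Y
    exact ⟨h1.1.trans (le_max_left _ _), max_le h1.2 h2.2⟩

lemma Delta_mem_Icc {γ : ℝ} (hγ : γ ∈ Set.Ioc (0 : ℝ) 1) (δ : S → A → Finset (S → ℝ))
    {d : S → S → ℝ} (hd : ∀ s t, d s t ∈ Set.Icc (0 : ℝ) 1) (s t : S) :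
    Delta γ δ d s t ∈ Set.Icc (0 : ℝ) 1 := by
  unfold Delta
  obtain ⟨a⟩ : Nonempty A := inferInstance
  have h0 := (Hdist_mem_Icc hd (δ s a) (δ t a)).1.trans
    (Finset.le_sup' (fun a => Hdist d (δ s a) (δ t a)) (Finset.mem_univ a))
  have h1 := Finset.sup'_le Finset.univ_nonempty (fun a => Hdist d (δ s a) (δ t a))
    fun a _ => (Hdist_mem_Icc hd (δ s a) (δ t a)).2
  exact ⟨mul_nonneg hγ.1.le h0, mul_le_one₀ hγ.2 h0 h1⟩

/-- One-sided nonexpansiveness of the lifting, from `min (d + ε) x ≤ min d x + ε`. -/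
lemma liftDist_le_add {d d' : S → S → ℝ} {ε : ℝ} (hε : 0 ≤ ε) (hd' : ∀ s t, 0 ≤ d' s t)
    (h : ∀ s t, d' s t ≤ d s t + ε) (μ η : S → ℝ) :
    liftDist d' μ η ≤ liftDist d μ η + ε := by
  unfold liftDist
  split_ifs with hm
  · by_cases hf : ∃ x, Feasible μ η x
    · obtain ⟨x₀, hx₀⟩ := hf
      rw [← sub_le_iff_le_add]
      refine le_csInf ⟨_, x₀, hx₀, rfl⟩ ?_
      rintro r ⟨x, hx, rfl⟩
      rw [sub_le_iff_le_add]
      have hbdd : BddBelow {r : ℝ | ∃ x : S → S → ℝ, Feasible μ η x ∧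
          r = Finset.univ.sup' Finset.univ_nonempty
            (fun p : S × S => min (d' p.1 p.2) (x p.1 p.2))} := by
        refine ⟨0, ?_⟩
        rintro r ⟨y, hy, rfl⟩
        exact objective_nonneg hd' hy.1
      refine (csInf_le hbdd ⟨x, hx, rfl⟩).trans ?_
      · refine Finset.sup'_le _ _ fun p _ => ?_
        have hp : min (d' p.1 p.2) (x p.1 p.2) ≤ min (d p.1 p.2) (x p.1 p.2) + ε := by
          rw [← min_add_add_right]
          exact min_le_min (h _ _) (le_add_of_nonneg_right hε)
        exact hp.trans (add_le_add_left
          (Finset.le_sup' (fun p : S × S => min (d p.1 p.2) (x p.1 p.2)) (Finset.mem_univ p)) ε)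
    · -- with no feasible `x` both infima are the junk value `sInf ∅ = 0`
      have : ∀ e : S → S → ℝ, {r : ℝ | ∃ x : S → S → ℝ, Feasible μ η x ∧
        r = Finset.univ.sup' Finset.univ_nonempty
            (fun p : S × S => min (e p.1 p.2) (x p.1 p.2))} = ∅ := by
        intro e
        ext r
        simp only [Set.mem_ofPred_eq, Set.mem_empty_iff_false, iff_false]
        rintro ⟨x, hx, -⟩
        exact hf ⟨x, hx⟩
      rw [this, this, Real.sInf_empty]
      linarith
  · linarith

lemma liftDistSet_le_add {d d' : S → S → ℝ} {ε : ℝ} (hε : 0 ≤ ε) (hd' : ∀ s t, 0 ≤ d' s t)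
    (h : ∀ s t, d' s t ≤ d s t + ε) (μ : S → ℝ) (W : Finset (S → ℝ)) :
    liftDistSet d' μ W ≤ liftDistSet d μ W + ε := by
  unfold liftDistSet
  split_ifs with hW
  · rw [← sub_le_iff_le_add]
    refine Finset.le_inf' _ _ fun ν hν => ?_
    rw [sub_le_iff_le_add]
    exact (Finset.inf'_le _ hν).trans (liftDist_le_add hε hd' h μ ν)
  · linarith

lemma sup0_le_add {Y : Finset (S → ℝ)} {f g : (S → ℝ) → ℝ} {ε : ℝ} (hε : 0 ≤ ε)
    (h : ∀ μ, f μ ≤ g μ + ε) : sup0 Y f ≤ sup0 Y g + ε := by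
  unfold sup0
  split_ifs with hY
  · exact Finset.sup'_le _ _ fun μ hμ =>
      (h μ).trans (add_le_add_left (Finset.le_sup' g hμ) ε)
  · linarith

lemma Hdist_le_add {d d' : S → S → ℝ} {ε : ℝ} (hε : 0 ≤ ε) (hd' : ∀ s t, 0 ≤ d' s t)
    (h : ∀ s t, d' s t ≤ d s t + ε) (Y Z : Finset (S → ℝ)) :
    Hdist d' Y Z ≤ Hdist d Y Z + ε := by
  unfold Hdist
  split_ifs with hYZ
  · linarith
  · rw [← max_add_add_right]
    exact max_le_max (sup0_le_add hε fun μ => liftDistSet_le_add hε hd' h μ Z)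
      (sup0_le_add hε fun μ => liftDistSet_le_add hε hd' h μ Y)

/-- One-sided nonexpansiveness of `Δ`; the case `ε = 0` is monotonicity. -/
lemma Delta_le_Delta_add {γ : ℝ} (hγ : γ ∈ Set.Ioc (0 : ℝ) 1) (δ : S → A → Finset (S → ℝ))
    {d d' : S → S → ℝ} {ε : ℝ} (hε : 0 ≤ ε) (hd' : ∀ s t, 0 ≤ d' s t)
    (h : ∀ s t, d' s t ≤ d s t + ε) (s t : S) :
    Delta γ δ d' s t ≤ Delta γ δ d s t + ε := by
  unfold Delta
  have hsup : Finset.univ.sup' Finset.univ_nonempty (fun a => Hdist d' (δ s a) (δ t a)) ≤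
      Finset.univ.sup' Finset.univ_nonempty (fun a => Hdist d (δ s a) (δ t a)) + ε :=
    Finset.sup'_le _ _ fun a ha => (Hdist_le_add hε hd' h _ _).trans
      (add_le_add_left (Finset.le_sup' (fun a => Hdist d (δ s a) (δ t a)) ha) ε)
  have h1 := mul_le_mul_of_nonneg_left hsup hγ.1.le
  have h2 : γ * ε ≤ ε := mul_le_of_le_one_left hε hγ.2
  linarith [mul_add γ
    (Finset.univ.sup' Finset.univ_nonempty (fun a => Hdist d (δ s a) (δ t a))) ε]

lemma Delta_mono {γ : ℝ} (hγ : γ ∈ Set.Ioc (0 : ℝ) 1) (δ : S → A → Finset (S → ℝ))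
    {d d' : S → S → ℝ} (hd' : ∀ s t, 0 ≤ d' s t)
    (h : ∀ s t, d' s t ≤ d s t) (s t : S) : Delta γ δ d' s t ≤ Delta γ δ d s t := by
  simpa using Delta_le_Delta_add hγ δ le_rfl hd' (fun s t => by simpa using h s t) s t

lemma iterate_mem_Icc {γ : ℝ} (hγ : γ ∈ Set.Ioc (0 : ℝ) 1) (δ : S → A → Finset (S → ℝ)) (n : ℕ) :
    ∀ s t, (Delta γ δ)^[n] (fun _ _ => 0) s t ∈ Set.Icc (0 : ℝ) 1 := by
  induction n with
  | zero => intro s t; simp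
  | succ n ih =>
    rw [Function.iterate_succ_apply']
    exact Delta_mem_Icc hγ δ ih

lemma iterate_le_succ {γ : ℝ} (hγ : γ ∈ Set.Ioc (0 : ℝ) 1) (δ : S → A → Finset (S → ℝ)) (n : ℕ) :
    ∀ s t, (Delta γ δ)^[n] (fun _ _ => 0) s t ≤ (Delta γ δ)^[n + 1] (fun _ _ => 0) s t := by
  induction n with
  | zero => intro s t; exact (iterate_mem_Icc hγ δ 1 s t).1
  | succ n ih =>
    rw [Function.iterate_succ_apply', Function.iterate_succ_apply' _ (n + 1)]
    exact Delta_mono hγ δ (fun s t => (iterate_mem_Icc hγ δ n s t).1) ih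

end Helpers

/-- the Kleene iteration `Δ^n(⊥)` is nondecreasing, its pointwise supremum
`d*` is a fixpoint of `Δ`, and `d*` is below every pre-fixpoint of `Δ`; i.e. `d*` is
the least fixpoint of `Δ`. -/
theorem kleene_least_fixpoint {S A : Type*} [Fintype S] [Nonempty S] [Fintype A] [Nonempty A]
    (γ : ℝ) (hγ : γ ∈ Set.Ioc (0:ℝ) 1)
    (δ : S → A → Finset (S → ℝ)) (hδ : FTSvalid δ)
    (dstar : S → S → ℝ)
    (hdstar : ∀ s t, dstar s t = ⨆ n : ℕ, (Delta γ δ)^[n] (fun _ _ => 0) s t) :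
    (∀ n : ℕ, ∀ s t, (Delta γ δ)^[n] (fun _ _ => 0) s t ≤
        (Delta γ δ)^[n+1] (fun _ _ => 0) s t) ∧
    Delta γ δ dstar = dstar ∧
    (∀ d : S → S → ℝ, (∀ s t, d s t ∈ Set.Icc (0:ℝ) 1) →
      (∀ s t, Delta γ δ d s t ≤ d s t) → ∀ s t, dstar s t ≤ d s t) := by
  have hbdd : ∀ s t, BddAbove (Set.range fun n : ℕ => (Delta γ δ)^[n] (fun _ _ => 0) s t) := by
    rintro s t
    refine ⟨1, ?_⟩
    rintro _ ⟨n, rfl⟩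
    exact (iterate_mem_Icc hγ δ n s t).2
  have hle : ∀ n s t, (Delta γ δ)^[n] (fun _ _ => 0) s t ≤ dstar s t := fun n s t => by
    rw [hdstar]
    exact le_ciSup (hbdd s t) n
  have hnonneg : ∀ s t, 0 ≤ dstar s t := fun s t => hle 0 s t
  refine ⟨iterate_le_succ hγ δ, ?_, ?_⟩
  · funext s t
    refine le_antisymm ?_ ?_
    · refine le_of_forall_pos_le_add fun ε hε => ?_
      -- finiteness of `S` makes the convergence of the chain uniform
      have hev : ∀ᶠ n : ℕ in atTop, ∀ s t,
          dstar s t ≤ (Delta γ δ)^[n] (fun _ _ => 0) s t + ε := by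
        rw [eventually_all]
        intro s
        rw [eventually_all]
        intro t
        have hlim := tendsto_atTop_ciSup
          (monotone_nat_of_le_succ fun n => iterate_le_succ hγ δ n s t) (hbdd s t)
        rw [← hdstar s t] at hlim
        filter_upwards [hlim.eventually (lt_mem_nhds (sub_lt_self (dstar s t) hε))] with n hn
        linarith
      obtain ⟨n, hn⟩ := hev.exists
      have h1 := Delta_le_Delta_add hγ δ hε.le hnonneg hn s t
      rw [← Function.iterate_succ_apply' (Delta γ δ)] at h1
      linarith [hle (n + 1) s t]
    · rw [hdstar s t]
      refine ciSup_le fun n => (iterate_le_succ hγ δ n s t).trans ?_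
      rw [Function.iterate_succ_apply']
      exact Delta_mono hγ δ (fun s t => (iterate_mem_Icc hγ δ n s t).1) (hle n) s t
  · intro d hd hpre s t
    rw [hdstar s t]
    refine ciSup_le fun n => ?_
    induction n generalizing s t with
    | zero => exact (hd s t).1
    | succ n ih =>
      rw [Function.iterate_succ_apply']
      exact (Delta_mono hγ δ (fun s t => (iterate_mem_Icc hγ δ n s t).1) ih s t).trans (hpre s t)
end

section
/- Let M = (S, A, δ) be a finite fuzzy transition system, let the discount factor be γ = 1, and let d be a pseudo-ultrametric on S. Then for all s, t ∈ S, the value Δ(d)(s,t) belongs to the finite set Θ_M ∪ {d(u,v) : u, v ∈ S}. -/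
/-!
Taking maxima and minima over finite nonempty families never leaves a set of reals, so the only
point is that the infimum defining `liftDist d μ η` lies in the set of values of `μ`, `η`, `d`
together with `0`. For a finite set `T` containing those values, rounding every entry of a feasible
`x` down to the nearest element of `T` keeps `x` feasible, because the prescribed row and column
maxima are already in `T`, and does not increase the objective, which afterwards lies in `T`.
Hence the objective values lying in the finite set `T` contain the least of all objective values,
and the infimum is attained there (`liftDist_mem`).
-/

open Finset
open scoped Classical

lemma sup'_mem_set {ι : Type*} {V : Set ℝ} (F : Finset ι) (hF : F.Nonempty) (f : ι → ℝ)
    (h : ∀ i ∈ F, f i ∈ V) : F.sup' hF f ∈ V := by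
  obtain ⟨i, hi, he⟩ := F.exists_mem_eq_sup' hF f
  exact he ▸ h i hi

lemma inf'_mem_set {ι : Type*} {V : Set ℝ} (F : Finset ι) (hF : F.Nonempty) (f : ι → ℝ)
    (h : ∀ i ∈ F, f i ∈ V) : F.inf' hF f ∈ V := by
  obtain ⟨i, hi, he⟩ := F.exists_mem_eq_inf' hF f
  exact he ▸ h i hi

/-- The operation of rounding a nonnegative real down to a finite set containing `0`. -/
lemma exists_round (T : Finset ℝ) (h0 : (0 : ℝ) ∈ T) :
    ∃ f : ℝ → ℝ, ∀ y, 0 ≤ y → f y ∈ T ∧ f y ≤ y ∧ ∀ t ∈ T, t ≤ y → t ≤ f y := by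
  have key : ∀ y : ℝ, ∃ z, 0 ≤ y → z ∈ T ∧ z ≤ y ∧ ∀ t ∈ T, t ≤ y → t ≤ z := by
    intro y
    by_cases hy : 0 ≤ y
    · obtain ⟨z, hz, hmax⟩ :=
        (T.filter (· ≤ y)).exists_max_image id ⟨0, Finset.mem_filter.2 ⟨h0, hy⟩⟩
      rw [Finset.mem_filter] at hz
      exact ⟨z, fun _ => ⟨hz.1, hz.2, fun t ht hty => hmax t (Finset.mem_filter.2 ⟨ht, hty⟩)⟩⟩
    · exact ⟨0, fun h => absurd h hy⟩
  choose f hf using key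
  exact ⟨f, hf⟩

/-- Rounding down to `T` preserves a maximum that already lies in `T`. -/
lemma maxS_round {S : Type*} [Fintype S] [Nonempty S] {T : Finset ℝ} {f : ℝ → ℝ}
    (hf : ∀ y, 0 ≤ y → f y ∈ T ∧ f y ≤ y ∧ ∀ t ∈ T, t ≤ y → t ≤ f y)
    (g : S → ℝ) (hg : ∀ u, 0 ≤ g u) (hT : maxS g ∈ T) :
    maxS (fun u => f (g u)) = maxS g := by
  apply le_antisymm
  · exact Finset.sup'_le _ _ fun u hu => (hf _ (hg u)).2.1.trans (Finset.le_sup' g hu)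
  · obtain ⟨u, hu, he⟩ := Finset.univ.exists_mem_eq_sup' Finset.univ_nonempty g
    exact ((hf _ (hg u)).2.2 _ hT he.le).trans (Finset.le_sup' (fun u => f (g u)) hu)

lemma liftDist_mem {S : Type*} [Fintype S] [Nonempty S] {V : Set ℝ} (d : S → S → ℝ)
    (μ η : S → ℝ) (h0 : (0 : ℝ) ∈ V) (h1 : (1 : ℝ) ∈ V) (hμ : ∀ u, μ u ∈ V)
    (hη : ∀ u, η u ∈ V) (hd : ∀ u v, d u v ∈ V) : liftDist d μ η ∈ V := by
  unfold liftDist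
  split_ifs with hm
  swap
  · exact h1
  set R : Set ℝ := {r : ℝ | ∃ x : S → S → ℝ, Feasible μ η x ∧
      r = Finset.univ.sup' Finset.univ_nonempty
            (fun p : S × S => min (d p.1 p.2) (x p.1 p.2))} with hR
  -- An empty set of reals has `sInf` equal to `0`, which belongs to `V`.
  rcases R.eq_empty_or_nonempty with he | ⟨r₀, hr₀⟩
  · rw [he, Real.sInf_empty]
    exact h0
  let T : Finset ℝ := insert 0 (Finset.univ.image μ ∪ Finset.univ.image η ∪
    Finset.univ.image (fun p : S × S => d p.1 p.2))
  have hTV : ∀ t ∈ T, t ∈ V := by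
    intro t ht
    simp only [T, Finset.mem_insert, Finset.mem_union, Finset.mem_image, Finset.mem_univ,
      true_and] at ht
    rcases ht with rfl | (⟨u, rfl⟩ | ⟨u, rfl⟩) | ⟨p, rfl⟩
    exacts [h0, hμ u, hη u, hd _ _]
  have hT0 : (0 : ℝ) ∈ T := by simp [T]
  have hTμ : ∀ u, μ u ∈ T := fun u => by simp [T]
  have hTη : ∀ u, η u ∈ T := fun u => by simp [T]
  have hTd : ∀ u v, d u v ∈ T := fun u v => by
    simp only [T, Finset.mem_insert, Finset.mem_union, Finset.mem_image, Finset.mem_univ, true_and]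
    exact Or.inr (Or.inr ⟨(u, v), rfl⟩)
  obtain ⟨f, hf⟩ := exists_round T hT0
  have hdom : ∀ r ∈ R, ∃ r' ∈ T, r' ∈ R ∧ r' ≤ r := by
    rintro r ⟨x, ⟨hx0, hxμ, hxη⟩, rfl⟩
    refine ⟨_, ?_, ⟨fun u v => f (x u v), ⟨?_, ?_, ?_⟩, rfl⟩, ?_⟩
    · refine sup'_mem_set (V := (T : Set ℝ)) _ _ _ fun p _ => ?_
      rcases min_choice (d p.1 p.2) (f (x p.1 p.2)) with h | h <;> rw [h]
      exacts [hTd _ _, (hf _ (hx0 _ _)).1]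
    · exact fun u v => (hf _ (hx0 u v)).2.2 0 hT0 (hx0 u v)
    · intro u
      rw [maxS_round hf (x u) (hx0 u) (by rw [hxμ]; exact hTμ u), hxμ]
    · intro v
      rw [maxS_round hf (fun u => x u v) (fun u => hx0 u v) (by rw [hxη]; exact hTη v), hxη]
    · exact Finset.sup'_mono_fun fun p _ => min_le_min le_rfl (hf _ (hx0 _ _)).2.1
  obtain ⟨r₁, hr₁T, hr₁R, -⟩ := hdom r₀ hr₀
  obtain ⟨m, hm, hmin⟩ :=
    (T.filter (· ∈ R)).exists_min_image id ⟨r₁, Finset.mem_filter.2 ⟨hr₁T, hr₁R⟩⟩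
  rw [Finset.mem_filter] at hm
  have hleast : IsLeast R m := by
    refine ⟨hm.2, fun r hr => ?_⟩
    obtain ⟨r', hr'T, hr'R, hle⟩ := hdom r hr
    exact (hmin r' (Finset.mem_filter.2 ⟨hr'T, hr'R⟩)).trans hle
  rw [hleast.csInf_eq]
  exact hTV m hm.1

lemma sup0_liftDistSet_mem {S : Type*} [Fintype S] [Nonempty S] {V : Set ℝ} (d : S → S → ℝ)
    (Y Z : Finset (S → ℝ)) (h0 : (0 : ℝ) ∈ V) (h1 : (1 : ℝ) ∈ V)
    (hY : ∀ μ ∈ Y, ∀ u, μ u ∈ V) (hZ : ∀ μ ∈ Z, ∀ u, μ u ∈ V) (hd : ∀ u v, d u v ∈ V) :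
    sup0 Y (fun μ => liftDistSet d μ Z) ∈ V := by
  unfold sup0
  split_ifs with h
  · refine sup'_mem_set _ _ _ fun μ hμ => ?_
    unfold liftDistSet
    split_ifs with h'
    · exact inf'_mem_set _ _ _ fun η hη => liftDist_mem d μ η h0 h1 (hY μ hμ) (hZ η hη) hd
    · exact h1
  · exact h0

/-- for `γ = 1` and a pseudo-ultrametric `d` on `S`, the value `Δ(d)(s,t)`
belongs to `Θ_M ∪ {d(u,v) : u, v ∈ S}`. -/
theorem Delta_mem_Theta_union {S A : Type*} [Fintype S] [Nonempty S] [Fintype A] [Nonempty A]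
    (δ : S → A → Finset (S → ℝ)) (hδ : FTSvalid δ)
    (d : S → S → ℝ)
    (hd01 : ∀ s t, d s t ∈ Set.Icc (0:ℝ) 1)
    (hrefl : ∀ s, d s s = 0)
    (hsymm : ∀ s t, d s t = d t s)
    (hultra : ∀ s t u, d s u ≤ max (d s t) (d t u)) :
    ∀ s t, Delta 1 δ d s t ∈ ThetaM δ ∪ {r : ℝ | ∃ u v, d u v = r} := by
  intro s t
  have h0 : (0 : ℝ) ∈ ThetaM δ ∪ {r : ℝ | ∃ u v, d u v = r} := by simp [ThetaM]
  have h1 : (1 : ℝ) ∈ ThetaM δ ∪ {r : ℝ | ∃ u v, d u v = r} := by simp [ThetaM]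
  have hd : ∀ u v, d u v ∈ ThetaM δ ∪ {r : ℝ | ∃ u v, d u v = r} :=
    fun u v => Or.inr ⟨u, v, rfl⟩
  have hΘ : ∀ s a, ∀ μ ∈ δ s a, ∀ u, μ u ∈ ThetaM δ ∪ {r : ℝ | ∃ u v, d u v = r} :=
    fun s a μ hμ u => Or.inl (Or.inl ⟨s, a, μ, hμ, u, rfl⟩)
  unfold Delta
  rw [one_mul]
  refine sup'_mem_set _ _ _ fun a _ => ?_
  unfold Hdist
  split_ifs with h
  · exact h0
  · rcases max_choice (sup0 (δ s a) fun μ => liftDistSet d μ (δ t a))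
      (sup0 (δ t a) fun ν => liftDistSet d ν (δ s a)) with h | h <;> rw [h]
    · exact sup0_liftDistSet_mem d _ _ h0 h1 (hΘ s a) (hΘ t a) hd
    · exact sup0_liftDistSet_mem d _ _ h0 h1 (hΘ t a) (hΘ s a) hd
end

section
/- Let S be a finite nonempty set and let D(S) be the set of all pseudo-ultrametrics on S, partially ordered by d ⪯ d' iff d(s,t) ≤ d'(s,t) for all s,t ∈ S. Then (D(S), ⪯) is a complete lattice: every subset of D(S) has a least upper bound and a greatest lower bound in D(S). -/
/-!
The pointwise supremum of a family of pseudo-ultrametrics is again a pseudo-ultrametric, since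
each axiom is preserved by suprema of families bounded by `1`
(`exists_lub_of_isPseudoUltrametric`). Hence every subset has a least upper bound.
The pointwise infimum may violate the ultrametric inequality; as in any poset with all suprema,
the greatest lower bound is the supremum of the set of lower bounds.
-/

/-- A pseudo-ultrametric on `S`: a `[0,1]`-valued function with `d(s,s) = 0`,
symmetry, and the strong (ultrametric) triangle inequality. -/
def IsPseudoUltrametric {S : Type*} (d : S → S → ℝ) : Prop :=
  (∀ s t, d s t ∈ Set.Icc (0:ℝ) 1) ∧
  (∀ s, d s s = 0) ∧
  (∀ s t, d s t = d t s) ∧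
  (∀ s t u, d s u ≤ max (d s t) (d t u))

/-- Least upper bounds are pointwise suprema. For `T = ∅` the real convention `sSup ∅ = 0` gives
the zero function, which is the bottom element. -/
theorem exists_lub_of_isPseudoUltrametric {S : Type*} (T : Set (S → S → ℝ))
    (hT : ∀ d ∈ T, IsPseudoUltrametric d) :
    ∃ u : S → S → ℝ, IsPseudoUltrametric u ∧
      (∀ d ∈ T, ∀ s t, d s t ≤ u s t) ∧
      (∀ w : S → S → ℝ, IsPseudoUltrametric w →
        (∀ d ∈ T, ∀ s t, d s t ≤ w s t) → ∀ s t, u s t ≤ w s t) := by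
  let u : S → S → ℝ := fun s t => sSup ((fun d : S → S → ℝ => d s t) '' T)
  have le_u : ∀ d ∈ T, ∀ s t, d s t ≤ u s t := fun d hd s t =>
    le_csSup ⟨1, by rintro _ ⟨e, he, rfl⟩; exact ((hT e he).1 s t).2⟩ ⟨d, hd, rfl⟩
  -- The condition `0 ≤ a` covers the case `T = ∅`.
  have u_le : ∀ s t a, 0 ≤ a → (∀ d ∈ T, d s t ≤ a) → u s t ≤ a := fun s t a ha h =>
    Real.sSup_le (by rintro _ ⟨e, he, rfl⟩; exact h e he) ha
  have u_nonneg : ∀ s t, 0 ≤ u s t := fun s t =>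
    Real.sSup_nonneg (by rintro _ ⟨e, he, rfl⟩; exact ((hT e he).1 s t).1)
  have u_symm_le : ∀ s t, u s t ≤ u t s := fun s t =>
    u_le s t _ (u_nonneg t s) fun d hd => ((hT d hd).2.2.1 s t).trans_le (le_u d hd t s)
  refine ⟨u, ⟨fun s t => ⟨u_nonneg s t, ?_⟩, fun s => ?_, fun s t => ?_, fun s t v => ?_⟩,
    le_u, fun w hw h s t => u_le s t _ (hw.1 s t).1 fun d hd => h d hd s t⟩
  · exact u_le s t 1 zero_le_one fun d hd => ((hT d hd).1 s t).2
  · exact le_antisymm (u_le s s 0 le_rfl fun d hd => ((hT d hd).2.1 s).le) (u_nonneg s s)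
  · exact le_antisymm (u_symm_le s t) (u_symm_le t s)
  · exact u_le s v _ (le_max_of_le_left (u_nonneg s t)) fun d hd =>
      ((hT d hd).2.2.2 s t v).trans (max_le_max (le_u d hd s t) (le_u d hd t v))

/-- the set `D(S)` of pseudo-ultrametrics on a finite nonempty set `S`,
ordered pointwise, is a complete lattice: every subset has a least upper bound and a
greatest lower bound in `D(S)`. -/
theorem pseudoUltrametrics_completeLattice {S : Type*} [Fintype S] [Nonempty S] :
    ∀ T : Set (S → S → ℝ), (∀ d ∈ T, IsPseudoUltrametric d) →
      (∃ u : S → S → ℝ, IsPseudoUltrametric u ∧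
        (∀ d ∈ T, ∀ s t, d s t ≤ u s t) ∧
        (∀ w : S → S → ℝ, IsPseudoUltrametric w →
          (∀ d ∈ T, ∀ s t, d s t ≤ w s t) → ∀ s t, u s t ≤ w s t)) ∧
      (∃ l : S → S → ℝ, IsPseudoUltrametric l ∧
        (∀ d ∈ T, ∀ s t, l s t ≤ d s t) ∧
        (∀ w : S → S → ℝ, IsPseudoUltrametric w →
          (∀ d ∈ T, ∀ s t, w s t ≤ d s t) → ∀ s t, w s t ≤ l s t)) := by
  intro T hT
  refine ⟨exists_lub_of_isPseudoUltrametric T hT, ?_⟩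
  obtain ⟨l, hl, hub, hleast⟩ := exists_lub_of_isPseudoUltrametric
    {w | IsPseudoUltrametric w ∧ ∀ d ∈ T, ∀ s t, w s t ≤ d s t} fun _ hw => hw.1
  exact ⟨l, hl, fun d hd => hleast d (hT d hd) fun w hw => hw.2 d hd,
    fun w hw h => hub w ⟨hw, h⟩⟩
end

section
/- Let S be a finite nonempty set and let μ, η : S → [0,1] be fuzzy subsets of S with max_{s∈S} μ(s) = max_{s∈S} η(s). Define x : S × S → [0,1] by x(s,t) = min(μ(s), η(t)). Then max_{t∈S} x(s,t) = μ(s) for every s ∈ S and max_{s∈S} x(s,t) = η(t) for every t ∈ S; in particular, the feasible set of the mathematical program defining the lifted distance d̂(μ,η) is nonempty. -/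
/-!
Each value `μ s` is at most `maxS μ = maxS η`, so capping `η` at the level `μ s` yields a
function whose maximum is exactly `μ s`, attained at a maximiser of `η` (`maxS_min_eq_left`).
The other family of constraints follows by exchanging `μ` and `η`.
-/

open Finset
open scoped Classical

/-- Capping `f` at a constant `c` that does not exceed `maxS f` gives a function with
maximum `c`: the value `c` is attained wherever `f` attains its maximum. -/
theorem maxS_min_eq_left {S : Type*} [Fintype S] [Nonempty S] (f : S → ℝ) (c : ℝ)
    (hc : c ≤ maxS f) : maxS (fun t => min c (f t)) = c := by
  unfold maxS at *
  apply le_antisymm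
  · exact Finset.sup'_le _ _ fun t _ => min_le_left _ _
  · obtain ⟨t, ht, hmax⟩ := Finset.exists_mem_eq_sup' Finset.univ_nonempty f
    rw [hmax] at hc
    exact (le_min le_rfl hc).trans (Finset.le_sup' (fun t => min c (f t)) ht)

theorem le_maxS {S : Type*} [Fintype S] [Nonempty S] (f : S → ℝ) (s : S) : f s ≤ maxS f :=
  Finset.le_sup' f (Finset.mem_univ s)

/-- if `max_s μ(s) = max_s η(s)`, then `x(s,t) = min(μ(s), η(t))`
satisfies both families of sup-constraints; in particular, the feasible set of the
mathematical program defining the lifted distance `d̂(μ,η)` is nonempty. -/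
theorem feasible_set_nonempty {S : Type*} [Fintype S] [Nonempty S]
    (μ η : S → ℝ)
    (hμ : ∀ s, μ s ∈ Set.Icc (0:ℝ) 1) (hη : ∀ s, η s ∈ Set.Icc (0:ℝ) 1)
    (h : maxS μ = maxS η) :
    (∀ s, maxS (fun t => min (μ s) (η t)) = μ s) ∧
    (∀ t, maxS (fun s => min (μ s) (η t)) = η t) ∧
    Feasible μ η (fun s t => min (μ s) (η t)) := by
  have h1 : ∀ s, maxS (fun t => min (μ s) (η t)) = μ s := fun s =>
    maxS_min_eq_left η (μ s) (h ▸ le_maxS μ s)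
  have h2 : ∀ t, maxS (fun s => min (μ s) (η t)) = η t := fun t => by
    simp only [min_comm _ (η t)]
    exact maxS_min_eq_left μ (η t) (h ▸ le_maxS η t)
  exact ⟨h1, h2, fun s t => le_min (hμ s).1 (hη t).1, h1, h2⟩
end

section
/- Let M = (S, A, δ) be a finite fuzzy transition system in which every membership value μ(s) (for s ∈ S and μ ∈ δ(s',a) with s' ∈ S, a ∈ A) is a rational number, and let the discount factor γ ∈ (0,1) be rational. Then every entry of the unique fixpoint d* of Δ (i.e., the unique d* : S × S → [0,1] with Δ(d*) = d*) is a rational number. -/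
/-!
The optimum defining the lifted distance `d̂(μ,η)` is always an entry of `d`, a value of `μ` or
`η`, or `0`: rounding a feasible `x` down to the finite set `Θ` of values of `μ`, `η` and `0` is
monotone and fixes `Θ`, so it keeps the max-constraints and does not increase the objective, and
the rounded objective lies in a finite set (`liftDist_mem`).
Maxima and minima over finite sets select one of their arguments, so each entry of `Δ(d)` is `γ`
times a rational number or `γ` times an entry of `d` (`Hdist_ratOrEntry`).

If the fixpoint had irrational entries, let `d*(s,t)` be a largest one. It is not `γ` times a
rational, so it is `γ · d*(s',t')` with `d*(s',t')` irrational; as `γ < 1` and `d*(s',t') > 0`,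
`d*(s',t')` is larger, a contradiction.
-/

open Finset
open scoped Classical

/-- `r` is rational or is one of the entries of `d`. -/
def RatOrEntry {S : Type*} (d : S → S → ℝ) (r : ℝ) : Prop :=
  (∃ q : ℚ, (q : ℝ) = r) ∨ ∃ s t, d s t = r

lemma ratOrEntry_zero {S : Type*} (d : S → S → ℝ) : RatOrEntry d 0 := Or.inl ⟨0, by simp⟩

lemma ratOrEntry_one {S : Type*} (d : S → S → ℝ) : RatOrEntry d 1 := Or.inl ⟨1, by simp⟩

lemma sup0_ratOrEntry {S : Type*} (d : S → S → ℝ) {Y : Finset (S → ℝ)} {f : (S → ℝ) → ℝ}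
    (h : ∀ η ∈ Y, RatOrEntry d (f η)) : RatOrEntry d (sup0 Y f) := by
  unfold sup0
  split_ifs with hY
  · obtain ⟨η, hη, he⟩ := Finset.exists_mem_eq_sup' hY f
    exact he ▸ h η hη
  · exact ratOrEntry_zero d

/-- The largest element of `Θ ∪ {0}` below `t`, or `0` if `t` is negative. -/
noncomputable def roundDown (Θ : Finset ℝ) (t : ℝ) : ℝ :=
  (insert 0 (Θ.filter (· ≤ t))).sup' (Finset.insert_nonempty _ _) id

lemma roundDown_nonneg (Θ : Finset ℝ) (t : ℝ) : 0 ≤ roundDown Θ t :=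
  Finset.le_sup' id (Finset.mem_insert_self _ _)

lemma roundDown_le (Θ : Finset ℝ) {t : ℝ} (ht : 0 ≤ t) : roundDown Θ t ≤ t := by
  refine Finset.sup'_le _ _ fun b hb => ?_
  rcases Finset.mem_insert.1 hb with rfl | hb
  · exact ht
  · exact (Finset.mem_filter.1 hb).2

lemma roundDown_mem (Θ : Finset ℝ) (t : ℝ) : roundDown Θ t ∈ insert 0 Θ := by
  obtain ⟨b, hb, h⟩ := Finset.exists_mem_eq_sup'
    (Finset.insert_nonempty 0 (Θ.filter (· ≤ t))) id
  rw [roundDown, h]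
  exact Finset.insert_subset_insert _ (Finset.filter_subset _ _) hb

lemma roundDown_mono (Θ : Finset ℝ) : Monotone (roundDown Θ) := by
  intro a b hab
  refine Finset.sup'_mono id (Finset.insert_subset_insert _ ?_) (Finset.insert_nonempty _ _)
  intro c hc
  rw [Finset.mem_filter] at hc ⊢
  exact ⟨hc.1, hc.2.trans hab⟩

lemma roundDown_eq (Θ : Finset ℝ) {t : ℝ} (ht : 0 ≤ t) (h : t ∈ Θ) : roundDown Θ t = t :=
  le_antisymm (roundDown_le Θ ht) (Finset.le_sup' (s := insert 0 (Θ.filter (· ≤ t))) id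
    (Finset.mem_insert_of_mem (Finset.mem_filter.2 ⟨h, le_rfl⟩)))

lemma maxS_comp_mono {S : Type*} [Fintype S] [Nonempty S] {f : ℝ → ℝ} (hf : Monotone f)
    (μ : S → ℝ) : maxS (fun s => f (μ s)) = f (maxS μ) := by
  refine le_antisymm (Finset.sup'_le _ _ fun b hb => hf (Finset.le_sup' μ hb)) ?_
  obtain ⟨b, hb, h⟩ := Finset.exists_mem_eq_sup' Finset.univ_nonempty μ
  rw [maxS, h]
  exact Finset.le_sup' (fun s => f (μ s)) hb

/-- A set of reals in which every element dominates an element lying in a finite set `V` has its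
infimum in `V`, unless it is empty. -/
lemma sInf_mem_of_finite {X : Set ℝ} (V : Finset ℝ) (hX : X.Nonempty)
    (h : ∀ r ∈ X, ∃ r' ∈ X, r' ∈ V ∧ r' ≤ r) : sInf X ∈ V := by
  have hne : (V.filter (· ∈ X)).Nonempty := by
    obtain ⟨r, hr⟩ := hX
    obtain ⟨r', h1, h2, -⟩ := h r hr
    exact ⟨r', Finset.mem_filter.2 ⟨h2, h1⟩⟩
  obtain ⟨m, hm, hmin⟩ := Finset.exists_min_image _ id hne
  have hm' := Finset.mem_filter.1 hm
  have : IsLeast X m := by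
    refine ⟨hm'.2, fun r hr => ?_⟩
    obtain ⟨r', h1, h2, h3⟩ := h r hr
    exact (hmin r' (Finset.mem_filter.2 ⟨h2, h1⟩)).trans h3
  rw [this.csInf_eq]
  exact hm'.1

section

variable {S : Type*} [Fintype S] [Nonempty S]

/-- The optimal value of the program defining `d̂(μ,η)` is `0` or occurs among the values of `μ`,
`η` and `d`; the value `1` covers the case of different maxima. -/
lemma liftDist_mem_s16 (d : S → S → ℝ) (μ η : S → ℝ) (hμ : ∀ u, 0 ≤ μ u) (hη : ∀ u, 0 ≤ η u) :
    liftDist d μ η = 0 ∨ liftDist d μ η = 1 ∨ (∃ u, μ u = liftDist d μ η) ∨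
      (∃ u, η u = liftDist d μ η) ∨ ∃ s t, d s t = liftDist d μ η := by
  unfold liftDist
  split_ifs with hmax
  swap
  · simp
  set X := {r : ℝ | ∃ x : S → S → ℝ, Feasible μ η x ∧
      r = Finset.univ.sup' Finset.univ_nonempty
            (fun p : S × S => min (d p.1 p.2) (x p.1 p.2))} with hXdef
  rcases X.eq_empty_or_nonempty with hX | hX
  · left
    rw [hX, Real.sInf_empty]
  set Θ : Finset ℝ := Finset.univ.image μ ∪ Finset.univ.image η with hΘ
  have key : sInf X ∈ insert 0 Θ ∪ Finset.univ.image (fun p : S × S => d p.1 p.2) := by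
    refine sInf_mem_of_finite _ hX ?_
    rintro r ⟨x, ⟨hx0, hx1, hx2⟩, rfl⟩
    refine ⟨_, ⟨fun u v => roundDown Θ (x u v), ⟨fun u v => roundDown_nonneg _ _, fun u => ?_,
      fun v => ?_⟩, rfl⟩, ?_, ?_⟩
    · rw [maxS_comp_mono (roundDown_mono Θ) (x u), hx1]
      exact roundDown_eq Θ (hμ u) (by simp [hΘ])
    · rw [maxS_comp_mono (roundDown_mono Θ) (fun u => x u v), hx2]
      exact roundDown_eq Θ (hη v) (by simp [hΘ])
    · obtain ⟨p, -, hp⟩ := Finset.exists_mem_eq_sup' Finset.univ_nonempty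
        (fun p : S × S => min (d p.1 p.2) (roundDown Θ (x p.1 p.2)))
      rw [hp]
      rcases min_choice (d p.1 p.2) (roundDown Θ (x p.1 p.2)) with h | h
      · rw [h]
        exact Finset.mem_union_right _
          (Finset.mem_image_of_mem (fun p : S × S => d p.1 p.2) (Finset.mem_univ p))
      · rw [h]
        exact Finset.mem_union_left _ (roundDown_mem _ _)
    · exact Finset.sup'_mono_fun fun p _ =>
        min_le_min_left _ (roundDown_le Θ (hx0 p.1 p.2))
  simp only [hΘ, Finset.mem_union, Finset.mem_insert, Finset.mem_image, Finset.mem_univ,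
    true_and, Prod.exists] at key
  tauto

lemma liftDist_ratOrEntry (d : S → S → ℝ) {μ η : S → ℝ} (hμ : ∀ u, 0 ≤ μ u)
    (hη : ∀ u, 0 ≤ η u) (hμq : ∀ u, ∃ q : ℚ, (q : ℝ) = μ u)
    (hηq : ∀ u, ∃ q : ℚ, (q : ℝ) = η u) : RatOrEntry d (liftDist d μ η) := by
  rcases liftDist_mem_s16 d μ η hμ hη with h | h | ⟨u, h⟩ | ⟨u, h⟩ | h
  · exact h ▸ ratOrEntry_zero d
  · exact h ▸ ratOrEntry_one d
  · exact Or.inl (h ▸ hμq u)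
  · exact Or.inl (h ▸ hηq u)
  · exact Or.inr h

lemma liftDistSet_ratOrEntry (d : S → S → ℝ) {μ : S → ℝ} {W : Finset (S → ℝ)}
    (h : ∀ η ∈ W, RatOrEntry d (liftDist d μ η)) : RatOrEntry d (liftDistSet d μ W) := by
  unfold liftDistSet
  split_ifs with hW
  · obtain ⟨η, hη, he⟩ := Finset.exists_mem_eq_inf' hW (liftDist d μ)
    exact he ▸ h η hη
  · exact ratOrEntry_one d

lemma Hdist_ratOrEntry (d : S → S → ℝ) {Y Z : Finset (S → ℝ)}
    (hY : ∀ μ ∈ Y, ∀ u, 0 ≤ μ u ∧ ∃ q : ℚ, (q : ℝ) = μ u)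
    (hZ : ∀ μ ∈ Z, ∀ u, 0 ≤ μ u ∧ ∃ q : ℚ, (q : ℝ) = μ u) : RatOrEntry d (Hdist d Y Z) := by
  have aux : ∀ {Y Z : Finset (S → ℝ)},
      (∀ μ ∈ Y, ∀ u, 0 ≤ μ u ∧ ∃ q : ℚ, (q : ℝ) = μ u) →
      (∀ μ ∈ Z, ∀ u, 0 ≤ μ u ∧ ∃ q : ℚ, (q : ℝ) = μ u) →
      RatOrEntry d (sup0 Y fun μ => liftDistSet d μ Z) := fun hY hZ =>
    sup0_ratOrEntry d fun μ hμ => liftDistSet_ratOrEntry d fun η hη =>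
      liftDist_ratOrEntry d (fun u => (hY μ hμ u).1) (fun u => (hZ η hη u).1)
        (fun u => (hY μ hμ u).2) (fun u => (hZ η hη u).2)
  unfold Hdist
  split_ifs
  · exact ratOrEntry_zero d
  · rcases max_choice (sup0 Y fun μ => liftDistSet d μ Z)
      (sup0 Z fun ν => liftDistSet d ν Y) with h | h
    · rw [h]
      exact aux hY hZ
    · rw [h]
      exact aux hZ hY

end

/-- if all membership values of the system and the discount factor
`γ ∈ (0,1)` are rational, then every entry of the unique fixpoint of `Δ` (i.e. of any
`d* : S × S → [0,1]` with `Δ(d*) = d*`) is rational. -/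
theorem fixpoint_rational {S A : Type*} [Fintype S] [Nonempty S] [Fintype A] [Nonempty A]
    (γ : ℝ) (hγ : γ ∈ Set.Ioo (0:ℝ) 1) (hγrat : ∃ q : ℚ, (q : ℝ) = γ)
    (δ : S → A → Finset (S → ℝ)) (hδ : FTSvalid δ)
    (hrat : ∀ s a, ∀ μ ∈ δ s a, ∀ u, ∃ q : ℚ, (q : ℝ) = μ u)
    (dstar : S → S → ℝ)
    (hdstar01 : ∀ s t, dstar s t ∈ Set.Icc (0:ℝ) 1)
    (hfix : Delta γ δ dstar = dstar) :
    ∀ s t, ∃ q : ℚ, (q : ℝ) = dstar s t := by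
  have hstep : ∀ s t, ∃ c, RatOrEntry dstar c ∧ dstar s t = γ * c := by
    intro s t
    obtain ⟨a, -, ha⟩ := Finset.exists_mem_eq_sup' Finset.univ_nonempty
      (fun a => Hdist dstar (δ s a) (δ t a))
    refine ⟨_, Hdist_ratOrEntry dstar (Y := δ s a) (Z := δ t a)
      (fun μ hμ u => ⟨(hδ s a μ hμ u).1, hrat s a μ hμ u⟩)
      (fun μ hμ u => ⟨(hδ t a μ hμ u).1, hrat t a μ hμ u⟩), ?_⟩
    rw [← ha]
    exact (congrFun (congrFun hfix s) t).symm
  by_contra hcon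
  push Not at hcon
  obtain ⟨s₀, t₀, h₀⟩ := hcon
  -- `p` indexes a largest irrational entry.
  obtain ⟨p, hp, hpmax⟩ := Finset.exists_max_image
    (Finset.univ.filter fun p : S × S => ∀ q : ℚ, (q : ℝ) ≠ dstar p.1 p.2)
    (fun p => dstar p.1 p.2) ⟨(s₀, t₀), by simpa using h₀⟩
  have hpirr := (Finset.mem_filter.1 hp).2
  obtain ⟨g, rfl⟩ := hγrat
  obtain ⟨c, ⟨q, rfl⟩ | ⟨s, t, rfl⟩, hc⟩ := hstep p.1 p.2
  · exact hpirr (g * q) (by rw [hc]; push_cast; rfl)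
  · have hirr : ∀ q : ℚ, (q : ℝ) ≠ dstar s t := fun q hq =>
      hpirr (g * q) (by rw [hc, ← hq]; push_cast; rfl)
    have hle : dstar s t ≤ dstar p.1 p.2 :=
      hpmax (s, t) (Finset.mem_filter.2 ⟨Finset.mem_univ _, hirr⟩)
    have hpos : 0 < dstar s t :=
      lt_of_le_of_ne (hdstar01 s t).1 (by simpa using hirr 0)
    rw [hc] at hle
    nlinarith [mul_pos (sub_pos.2 hγ.2) hpos]
end
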